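/- Let ψ_PR(x) = 1/6 + (2/3)·x·ln(x) on (0,1). Then ∫_0^1 ψ_PR(x) dx = 0, ∫_0^1 ψ_PR(x) ln(x) dx = 0, and consequently ∫_0^1 ψ_PR(x)² dx − ( ∫_0^1 ψ_PR(x) ln(x) dx )² = 5/972. Hence for the alternative density g_3(x,θ) = 1 + θ·ψ_PR(x) (the third alternative) the Kullback–Leibler distance to the power function family satisfies 2K(θ) ~ (5/972)·θ² as θ → 0+. -/

import Mathlib

/-!
With the moment `c = -∫₀¹ g ln x` of a density `g` on `(0, 1)`, the divergence of `g` from the power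
density `λ x^(λ-1)` is `∫₀¹ klFun(g) - c + (c λ - ln λ)`, where `klFun u = u ln u + 1 - u`. It is
minimal at `λ = 1/c`, whence `K = ∫₀¹ klFun(g) + ln c + 1 - c`.

For `g = 1 + θ h` with `∫₀¹ h = 0` the moment is `c = 1 - θ b`, `b = ∫₀¹ h ln x`. Dividing by `θ²`,
`ln c + 1 - c` contributes `-b²/2`, and `0 ≤ klFun(1 + u) ≤ u²` for `u ≥ -1` lets dominated
convergence give the contribution `∫₀¹ h² / 2` of the first term. So `2K(θ)/θ² → ∫₀¹ h² - b²` for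
every square-integrable `h` that is bounded below.
-/

open MeasureTheory Set Filter Topology

section Moments

theorem image_exp_neg_Ioi_zero : (fun t : ℝ => Real.exp (-t)) '' Ioi 0 = Ioo 0 1 := by
  have hneg : (fun t : ℝ => -t) '' Ioi 0 = Iio 0 := by simp
  rw [← image_image Real.exp, hneg]
  ext x
  constructor
  · rintro ⟨t, ht, rfl⟩
    exact ⟨Real.exp_pos t, Real.exp_lt_one_iff.mpr ht⟩
  · exact fun hx => ⟨Real.log x, Real.log_neg hx.1 hx.2, Real.exp_log hx.1⟩

theorem integral_rpow_mul_log_pow {s : ℝ} (hs : -1 < s) (n : ℕ) :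
    ∫ x in Ioo (0 : ℝ) 1, x ^ s * Real.log x ^ n
      = (-1) ^ n * n.factorial / (s + 1) ^ (n + 1) := by
  -- The substitution `x = exp (-t)` turns the moment into a Gamma integral.
  have hderiv : ∀ t ∈ Ioi (0 : ℝ),
      HasDerivWithinAt (fun t => Real.exp (-t)) (-Real.exp (-t)) (Ioi 0) t := fun t _ => by
    simpa using (hasDerivAt_neg t).exp.hasDerivWithinAt
  have hinj : InjOn (fun t : ℝ => Real.exp (-t)) (Ioi 0) :=
    (Real.exp_injective.comp neg_injective).injOn
  have hpull : ∀ t : ℝ, |-Real.exp (-t)| • (Real.exp (-t) ^ s * Real.log (Real.exp (-t)) ^ n)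
      = (-1) ^ n * (t ^ ((n + 1 : ℝ) - 1) * Real.exp (-((s + 1) * t))) := fun t => by
    have hexp : Real.exp (-((s + 1) * t)) = Real.exp (-t) * Real.exp (-t * s) := by
      rw [← Real.exp_add]; ring_nf
    rw [abs_neg, Real.abs_exp, ← Real.exp_mul, Real.log_exp, add_sub_cancel_right,
      Real.rpow_natCast, neg_pow, hexp, smul_eq_mul]
    ring
  rw [← image_exp_neg_Ioi_zero,
    integral_image_eq_integral_abs_deriv_smul measurableSet_Ioi hderiv hinj]
  simp only [hpull]
  rw [integral_const_mul, Real.integral_rpow_mul_exp_neg_mul_Ioi (by positivity) (by linarith),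
    Real.Gamma_nat_eq_factorial, one_div, ← Nat.cast_add_one, Real.rpow_natCast, inv_pow,
    mul_div_assoc, div_eq_inv_mul]

theorem integrableOn_rpow_mul_log_pow {s : ℝ} (hs : -1 < s) (n : ℕ) :
    IntegrableOn (fun x : ℝ => x ^ s * Real.log x ^ n) (Ioo 0 1) := by
  have hs' : 0 < s + 1 := by linarith
  refine Integrable.of_integral_ne_zero ?_
  rw [integral_rpow_mul_log_pow hs]
  positivity

theorem memLp_two_log : MemLp Real.log 2 (volume.restrict (Ioo 0 1)) := by
  rw [memLp_two_iff_integrable_sq Real.measurable_log.aestronglyMeasurable]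
  simpa [IntegrableOn] using integrableOn_rpow_mul_log_pow (s := 0) (by norm_num) 2

theorem integral_log_Ioo : ∫ x in Ioo (0 : ℝ) 1, Real.log x = -1 := by
  simpa using integral_rpow_mul_log_pow (s := 0) (by norm_num) 1

end Moments

section SecondOrder

open InformationTheory

theorem tendsto_div_sq_of_hasDerivAt {f f' : ℝ → ℝ} {a d : ℝ}
    (hf : ∀ᶠ x in 𝓝 a, HasDerivAt f (f' x) x) (hf' : HasDerivAt f' d a)
    (hfa : f a = 0) (hf'a : f' a = 0) :
    Tendsto (fun x => f x / (x - a) ^ 2) (𝓝[≠] a) (𝓝 (d / 2)) := by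
  have hsq (x : ℝ) : HasDerivAt (fun x => (x - a) ^ 2) (2 * (x - a)) x := by
    simpa using ((hasDerivAt_id x).sub_const a).fun_pow 2
  have hslope : Tendsto (fun x => f' x / (2 * (x - a))) (𝓝[≠] a) (𝓝 (d / 2)) := by
    refine (hf'.tendsto_slope.div_const 2).congr fun x => ?_
    rw [slope_def_field, hf'a, sub_zero, div_div, mul_comm]
  refine HasDerivAt.lhopital_zero_nhdsNE (hf.filter_mono nhdsWithin_le_nhds)
    (.of_forall hsq) ?_ ?_ ?_ hslope
  · filter_upwards [self_mem_nhdsWithin] with x hx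
    exact mul_ne_zero two_ne_zero (sub_ne_zero.mpr hx)
  · simpa [hfa] using hf.self_of_nhds.continuousAt.tendsto.mono_left nhdsWithin_le_nhds
  · simpa using (hsq a).continuousAt.tendsto.mono_left nhdsWithin_le_nhds

theorem hasDerivAt_one_add_mul (b θ : ℝ) : HasDerivAt (fun θ => 1 + θ * b) b θ := by
  simpa using ((hasDerivAt_id θ).mul_const b).const_add 1

theorem eventually_one_add_mul_ne_zero (b : ℝ) : ∀ᶠ θ in 𝓝 0, 1 + θ * b ≠ 0 :=
  (hasDerivAt_one_add_mul b 0).continuousAt.eventually_ne (by simp)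

theorem hasDerivAt_log_one_add_mul {b θ : ℝ} (h : 1 + θ * b ≠ 0) :
    HasDerivAt (fun θ => Real.log (1 + θ * b)) (b / (1 + θ * b)) θ :=
  (hasDerivAt_one_add_mul b θ).log h

theorem tendsto_klFun_one_add_mul_div_sq (t : ℝ) :
    Tendsto (fun θ => klFun (1 + θ * t) / θ ^ 2) (𝓝[≠] 0) (𝓝 (t ^ 2 / 2)) := by
  have hderiv : ∀ᶠ θ in 𝓝 0,
      HasDerivAt (fun θ => klFun (1 + θ * t)) (Real.log (1 + θ * t) * t) θ :=
    (eventually_one_add_mul_ne_zero t).mono fun θ hθ =>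
      HasDerivAt.comp (h₂ := klFun) θ (hasDerivAt_klFun hθ) (hasDerivAt_one_add_mul t θ)
  have hderiv₂ : HasDerivAt (fun θ => Real.log (1 + θ * t) * t) (t ^ 2) 0 := by
    simpa [sq] using (hasDerivAt_log_one_add_mul (b := t) (θ := 0) (by simp)).mul_const t
  simpa using tendsto_div_sq_of_hasDerivAt hderiv hderiv₂ (by simp [klFun_one]) (by simp)

theorem tendsto_log_one_add_mul_sub_div_sq (b : ℝ) :
    Tendsto (fun θ => (Real.log (1 + θ * b) - θ * b) / θ ^ 2) (𝓝[≠] 0) (𝓝 (-b ^ 2 / 2)) := by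
  have hderiv : ∀ᶠ θ in 𝓝 0,
      HasDerivAt (fun θ => Real.log (1 + θ * b) - θ * b) (b / (1 + θ * b) - b) θ :=
    (eventually_one_add_mul_ne_zero b).mono fun θ hθ => by
      simpa using (hasDerivAt_log_one_add_mul hθ).fun_sub ((hasDerivAt_id θ).mul_const b)
  have hderiv₂ : HasDerivAt (fun θ => b / (1 + θ * b) - b) (-b ^ 2) 0 := by
    simpa [sq] using
      ((hasDerivAt_const 0 b).fun_div (hasDerivAt_one_add_mul b 0) (by simp)).sub_const b
  simpa using tendsto_div_sq_of_hasDerivAt hderiv hderiv₂ (by simp) (by simp)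

theorem klFun_one_add_le_sq {u : ℝ} (hu : -1 ≤ u) : klFun (1 + u) ≤ u ^ 2 := by
  rcases hu.eq_or_lt with rfl | hu
  · simp [klFun_zero]
  · have hlog : Real.log (1 + u) ≤ u := by
      linarith [Real.log_le_sub_one_of_pos (show 0 < 1 + u by linarith)]
    calc klFun (1 + u) = (1 + u) * Real.log (1 + u) - u := by rw [klFun_apply]; ring
      _ ≤ (1 + u) * u - u := by gcongr; linarith
      _ = u ^ 2 := by ring

theorem norm_klFun_one_add_le_sq {u : ℝ} (hu : -1 ≤ u) : ‖klFun (1 + u)‖ ≤ u ^ 2 := by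
  rw [Real.norm_of_nonneg (klFun_nonneg (by linarith))]
  exact klFun_one_add_le_sq hu

variable {α : Type*} {mα : MeasurableSpace α} {μ : Measure α} {h : α → ℝ}

theorem aestronglyMeasurable_klFun_one_add (hm : AEStronglyMeasurable h μ) :
    AEStronglyMeasurable (fun x => klFun (1 + h x)) μ :=
  continuous_klFun.comp_aestronglyMeasurable (hm.const_add 1)

theorem integrable_klFun_one_add (h₂ : MemLp h 2 μ) (hb : ∀ᵐ x ∂μ, -1 ≤ h x) :
    Integrable (fun x => klFun (1 + h x)) μ :=
  h₂.integrable_sq.mono' (aestronglyMeasurable_klFun_one_add h₂.aestronglyMeasurable)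
    (hb.mono fun _ hx => norm_klFun_one_add_le_sq hx)

theorem eventually_ae_neg_one_le_mul {C : ℝ} (hb : ∀ᵐ x ∂μ, C ≤ h x) :
    ∀ᶠ θ in 𝓝[>] (0 : ℝ), ∀ᵐ x ∂μ, -1 ≤ θ * h x := by
  have hC : ∀ᶠ θ in 𝓝 (0 : ℝ), -1 < θ * C :=
    (continuous_mul_const C).continuousAt.eventually_const_lt (by simp)
  filter_upwards [hC.filter_mono nhdsWithin_le_nhds, self_mem_nhdsWithin] with θ hθC hθ
  filter_upwards [hb] with x hx
  exact hθC.le.trans (mul_le_mul_of_nonneg_left hx (le_of_lt hθ))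

theorem tendsto_integral_klFun_one_add_mul_div_sq {C : ℝ} (h₂ : MemLp h 2 μ)
    (hb : ∀ᵐ x ∂μ, C ≤ h x) :
    Tendsto (fun θ => (∫ x, klFun (1 + θ * h x) ∂μ) / θ ^ 2) (𝓝[>] 0)
      (𝓝 ((∫ x, h x ^ 2 ∂μ) / 2)) := by
  simp only [← integral_div]
  refine tendsto_integral_filter_of_dominated_convergence (fun x => h x ^ 2) ?_ ?_
    h₂.integrable_sq ?_
  · exact .of_forall fun θ =>
      ((aestronglyMeasurable_klFun_one_add
        (h₂.aestronglyMeasurable.const_mul θ)).aemeasurable.div_const _).aestronglyMeasurable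
  · filter_upwards [eventually_ae_neg_one_le_mul hb, self_mem_nhdsWithin] with θ hge hθ
    filter_upwards [hge] with x hx
    have hθ₂ : 0 < θ ^ 2 := pow_pos hθ 2
    rw [norm_div, Real.norm_of_nonneg hθ₂.le, div_le_iff₀ hθ₂, mul_comm (h x ^ 2), ← mul_pow]
    exact norm_klFun_one_add_le_sq hx
  · exact .of_forall fun x =>
      (tendsto_klFun_one_add_mul_div_sq (h x)).mono_left (nhdsGT_le_nhdsNE 0)

end SecondOrder

section PowerFamily

open InformationTheory

/-- The Kullback–Leibler divergence of a density `g` on `(0, 1)` from the power function density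
`x ↦ l * x ^ (l - 1)`, as a real number. -/
noncomputable def powerDiv (g : ℝ → ℝ) (l : ℝ) : ℝ :=
  ∫ x in Ioo (0 : ℝ) 1, Real.log (g x / (l * x ^ (l - 1))) * g x

/-- The Kullback–Leibler distance from a density `g` on `(0, 1)` to the power function family, that
is the infimum of `powerDiv g` over all positive exponents. -/
noncomputable def powerFamilyDist (g : ℝ → ℝ) : ℝ :=
  sInf (powerDiv g '' Ioi 0)

theorem isLeast_image_mul_sub_log {c : ℝ} (hc : 0 < c) :
    IsLeast ((fun l => c * l - Real.log l) '' Ioi 0) (1 + Real.log c) := by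
  refine ⟨⟨c⁻¹, inv_pos.mpr hc, by simp [hc.ne']⟩, ?_⟩
  rintro _ ⟨l, hl, rfl⟩
  have hlog := Real.log_le_sub_one_of_pos (mul_pos hc hl)
  rw [Real.log_mul hc.ne' (ne_of_gt hl)] at hlog
  linarith

/-- At a zero of `g` both sides vanish, by the convention `log 0 = 0`. -/
theorem log_div_mul_rpow_mul {g l x : ℝ} (hl : 0 < l) (hx : 0 < x) :
    Real.log (g / (l * x ^ (l - 1))) * g
      = (klFun g - 1) + (1 - Real.log l) * g - (l - 1) * (g * Real.log x) := by
  rcases eq_or_ne g 0 with rfl | hg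
  · simp [klFun_zero]
  · have hxl : x ^ (l - 1) ≠ 0 := (Real.rpow_pos_of_pos hx _).ne'
    rw [Real.log_div hg (mul_ne_zero hl.ne' hxl), Real.log_mul hl.ne' hxl, Real.log_rpow hx,
      klFun_apply]
    ring

variable {g : ℝ → ℝ}

theorem powerDiv_eq (hg₁ : ∫ x in Ioo (0 : ℝ) 1, g x = 1)
    (hkl : IntegrableOn (fun x => klFun (g x)) (Ioo 0 1))
    (hlog : IntegrableOn (fun x => g x * Real.log x) (Ioo 0 1)) {l : ℝ} (hl : 0 < l) :
    powerDiv g l = (∫ x in Ioo (0 : ℝ) 1, klFun (g x)) + (∫ x in Ioo (0 : ℝ) 1, g x * Real.log x)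
      + ((-∫ x in Ioo (0 : ℝ) 1, g x * Real.log x) * l - Real.log l) := by
  have hg : IntegrableOn g (Ioo 0 1) := .of_integral_ne_zero (by simp [hg₁])
  have hone : IntegrableOn (fun _ : ℝ => (1 : ℝ)) (Ioo 0 1) := by simp
  have hvolume : ∫ _ in Ioo (0 : ℝ) 1, (1 : ℝ) = 1 := by simp
  have hentropy : IntegrableOn (fun x => klFun (g x) - 1) (Ioo 0 1) := hkl.sub hone
  have hscaled : IntegrableOn (fun x => (1 - Real.log l) * g x) (Ioo 0 1) := hg.const_mul _
  rw [powerDiv, setIntegral_congr_fun measurableSet_Ioo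
      fun x hx => log_div_mul_rpow_mul hl hx.1,
    integral_sub (hentropy.fun_add hscaled) (hlog.const_mul _), integral_add hentropy hscaled,
    integral_sub hkl hone, integral_const_mul, integral_const_mul, hg₁, hvolume]
  ring

theorem setIntegral_mul_log_neg (hg₀ : ∀ᵐ x ∂volume.restrict (Ioo 0 1), 0 ≤ g x)
    (hg₁ : ∫ x in Ioo (0 : ℝ) 1, g x ≠ 0)
    (hlog : IntegrableOn (fun x => g x * Real.log x) (Ioo 0 1)) :
    ∫ x in Ioo (0 : ℝ) 1, g x * Real.log x < 0 := by
  have hmem : ∀ᵐ x ∂volume.restrict (Ioo (0 : ℝ) 1), x ∈ Ioo (0 : ℝ) 1 :=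
    ae_restrict_mem measurableSet_Ioo
  have hnonneg : 0 ≤ᵐ[volume.restrict (Ioo 0 1)] fun x => -(g x * Real.log x) := by
    filter_upwards [hg₀, hmem] with x hgx hx
    exact neg_nonneg.mpr
      (mul_nonpos_of_nonneg_of_nonpos hgx (Real.log_nonpos hx.1.le hx.2.le))
  refine neg_pos.mp (integral_neg (f := fun x => g x * Real.log x) ▸
    (integral_nonneg_of_ae hnonneg).lt_of_ne' fun hzero => hg₁ ?_)
  refine integral_eq_zero_of_ae ?_
  filter_upwards [(integral_eq_zero_iff_of_nonneg_ae hnonneg hlog.neg).mp hzero, hmem]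
    with x hgx hx
  simpa [(Real.log_neg hx.1 hx.2).ne] using hgx

theorem powerFamilyDist_eq (hg₀ : ∀ᵐ x ∂volume.restrict (Ioo 0 1), 0 ≤ g x)
    (hg₁ : ∫ x in Ioo (0 : ℝ) 1, g x = 1)
    (hkl : IntegrableOn (fun x => klFun (g x)) (Ioo 0 1))
    (hlog : IntegrableOn (fun x => g x * Real.log x) (Ioo 0 1)) :
    powerFamilyDist g = (∫ x in Ioo (0 : ℝ) 1, klFun (g x))
      + (∫ x in Ioo (0 : ℝ) 1, g x * Real.log x)
      + (1 + Real.log (-∫ x in Ioo (0 : ℝ) 1, g x * Real.log x)) := by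
  have hc := neg_pos.mpr (setIntegral_mul_log_neg hg₀ (by simp [hg₁]) hlog)
  have himage : powerDiv g '' Ioi 0 = (fun l => _ + (_ * l - Real.log l)) '' Ioi 0 :=
    image_congr fun l hl => powerDiv_eq hg₁ hkl hlog hl
  rw [powerFamilyDist, himage, ← image_image]
  exact ((monotone_id.const_add _).map_isLeast (isLeast_image_mul_sub_log hc)).csInf_eq

variable {h : ℝ → ℝ} {θ : ℝ}

theorem powerFamilyDist_one_add_mul (h₂ : MemLp h 2 (volume.restrict (Ioo 0 1)))
    (h₀ : ∫ x in Ioo (0 : ℝ) 1, h x = 0)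
    (hθ : ∀ᵐ x ∂volume.restrict (Ioo 0 1), -1 ≤ θ * h x) :
    powerFamilyDist (fun x => 1 + θ * h x) = (∫ x in Ioo (0 : ℝ) 1, klFun (1 + θ * h x))
      + (Real.log (1 + θ * -∫ x in Ioo (0 : ℝ) 1, h x * Real.log x)
        - θ * -∫ x in Ioo (0 : ℝ) 1, h x * Real.log x) := by
  have hθh : IntegrableOn (fun x => θ * h x) (Ioo 0 1) :=
    (h₂.integrable one_le_two).const_mul θ
  have hlog : IntegrableOn Real.log (Ioo 0 1) := memLp_two_log.integrable one_le_two
  have hθhlog : IntegrableOn (fun x => θ * (h x * Real.log x)) (Ioo 0 1) :=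
    (h₂.integrable_mul memLp_two_log).const_mul θ
  have hmass : ∫ x in Ioo (0 : ℝ) 1, (1 + θ * h x) = 1 := by
    rw [integral_add (by simp) hθh, integral_const_mul, h₀]
    simp
  have hsplit (x : ℝ) : (1 + θ * h x) * Real.log x = Real.log x + θ * (h x * Real.log x) := by
    ring
  have hmoment : ∫ x in Ioo (0 : ℝ) 1, (1 + θ * h x) * Real.log x
      = -1 + θ * ∫ x in Ioo (0 : ℝ) 1, h x * Real.log x := by
    simp only [hsplit]
    rw [integral_add hlog hθhlog, integral_log_Ioo, integral_const_mul]
  rw [powerFamilyDist_eq (hθ.mono fun x hx => by linarith) hmass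
    (integrable_klFun_one_add (h₂.const_mul θ) hθ)
    (by simpa only [hsplit] using hlog.fun_add hθhlog), hmoment]
  ring_nf

theorem tendsto_two_mul_powerFamilyDist_div_sq {C : ℝ}
    (h₂ : MemLp h 2 (volume.restrict (Ioo 0 1)))
    (hb : ∀ᵐ x ∂volume.restrict (Ioo 0 1), C ≤ h x) (h₀ : ∫ x in Ioo (0 : ℝ) 1, h x = 0) :
    Tendsto (fun θ => 2 * powerFamilyDist (fun x => 1 + θ * h x) / θ ^ 2) (𝓝[>] 0)
      (𝓝 ((∫ x in Ioo (0 : ℝ) 1, h x ^ 2) - (∫ x in Ioo (0 : ℝ) 1, h x * Real.log x) ^ 2)) := by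
  have hlim := ((tendsto_integral_klFun_one_add_mul_div_sq h₂ hb).add
    ((tendsto_log_one_add_mul_sub_div_sq (-∫ x in Ioo (0 : ℝ) 1, h x * Real.log x)).mono_left
      (nhdsGT_le_nhdsNE 0))).const_mul 2
  convert hlim.congr' ?_ using 2
  · ring
  · filter_upwards [eventually_ae_neg_one_le_mul hb] with θ hθ
    rw [powerFamilyDist_one_add_mul h₂ h₀ hθ]
    ring

end PowerFamily

section PuriRubin

/-- The projection `ψ_PR` of the Puri–Rubin kernel under the uniform distribution on `(0, 1)`. -/
noncomputable def puriRubin (x : ℝ) : ℝ := 1 / 6 + (2 / 3) * x * Real.log x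

theorem continuous_puriRubin : Continuous puriRubin := by
  unfold puriRubin
  simp only [mul_assoc]
  exact (Real.continuous_mul_log.const_mul _).const_add _

theorem memLp_puriRubin : MemLp puriRubin 2 (volume.restrict (Ioo 0 1)) := by
  rw [memLp_two_iff_integrable_sq continuous_puriRubin.aestronglyMeasurable]
  exact (continuous_puriRubin.pow 2).integrableOn_Icc.mono_set Ioo_subset_Icc_self

theorem neg_half_le_puriRubin {x : ℝ} (hx : 0 ≤ x) : -1 / 2 ≤ puriRubin x := by
  have hkl := InformationTheory.klFun_nonneg hx
  rw [InformationTheory.klFun_apply] at hkl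
  rw [puriRubin, mul_assoc]
  linarith

theorem integral_puriRubin : ∫ x in Ioo (0 : ℝ) 1, puriRubin x = 0 := by
  have hint := integrableOn_rpow_mul_log_pow (s := 1) (by norm_num) 1
  have hval := integral_rpow_mul_log_pow (s := 1) (by norm_num) 1
  simp only [Real.rpow_one, pow_one] at hint hval
  simp only [puriRubin, mul_assoc]
  rw [integral_add (by simp) (hint.const_mul _), integral_const_mul, hval]
  norm_num

theorem integral_puriRubin_mul_log :
    ∫ x in Ioo (0 : ℝ) 1, puriRubin x * Real.log x = 0 := by
  have hint := integrableOn_rpow_mul_log_pow (s := 1) (by norm_num) 2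
  have hval := integral_rpow_mul_log_pow (s := 1) (by norm_num) 2
  have hlog : IntegrableOn Real.log (Ioo 0 1) := memLp_two_log.integrable one_le_two
  have hexpand (x : ℝ) : puriRubin x * Real.log x
      = 1 / 6 * Real.log x + 2 / 3 * (x ^ (1 : ℝ) * Real.log x ^ 2) := by
    rw [puriRubin, Real.rpow_one]; ring
  simp only [hexpand]
  rw [integral_add (hlog.const_mul _) (hint.const_mul _), integral_const_mul,
    integral_const_mul, integral_log_Ioo, hval]
  norm_num

theorem integral_puriRubin_sq : ∫ x in Ioo (0 : ℝ) 1, puriRubin x ^ 2 = 5 / 972 := by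
  have hint₁ := integrableOn_rpow_mul_log_pow (s := 1) (by norm_num) 1
  have hint₂ := integrableOn_rpow_mul_log_pow (s := 2) (by norm_num) 2
  have hval₁ := integral_rpow_mul_log_pow (s := 1) (by norm_num) 1
  have hval₂ := integral_rpow_mul_log_pow (s := 2) (by norm_num) 2
  have hexpand (x : ℝ) : puriRubin x ^ 2 = 1 / 36
      + 2 / 9 * (x ^ (1 : ℝ) * Real.log x ^ 1) + 4 / 9 * (x ^ (2 : ℝ) * Real.log x ^ 2) := by
    rw [puriRubin, Real.rpow_one, Real.rpow_two]; ring
  have hone : IntegrableOn (fun _ : ℝ => (1 / 36 : ℝ)) (Ioo 0 1) := by simp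
  simp only [hexpand]
  rw [integral_add (hone.fun_add (hint₁.const_mul _)) (hint₂.const_mul _),
    integral_add hone (hint₁.const_mul _), integral_const_mul, integral_const_mul, hval₁, hval₂]
  norm_num [Nat.factorial]

end PuriRubin

/-- With `ψ_PR(x) = 1/6 + (2/3)·x·ln x` on `(0,1)`:
`∫₀¹ ψ_PR = 0`, `∫₀¹ ψ_PR(x) ln x dx = 0`, and consequently
`∫₀¹ ψ_PR² − (∫₀¹ ψ_PR(x) ln x dx)² = 5/972`.  Hence for the third alternative
`g₃(x,θ) = 1 + θ·ψ_PR(x)`, the Kullback–Leibler distance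
`K(θ) = inf_{λ>0} ∫₀¹ ln(g₃(x,θ)/(λ x^{λ−1})) g₃(x,θ) dx` to the power function
family satisfies `2K(θ) ~ (5/972)·θ²` as `θ → 0+`. -/
theorem third_alternative_kullback_leibler :
    let ψ : ℝ → ℝ := fun x => 1 / 6 + (2 / 3) * x * Real.log x
    (∫ x in Ioo (0 : ℝ) 1, ψ x = 0) ∧
    (∫ x in Ioo (0 : ℝ) 1, ψ x * Real.log x = 0) ∧
    ((∫ x in Ioo (0 : ℝ) 1, ψ x ^ 2)
        - (∫ x in Ioo (0 : ℝ) 1, ψ x * Real.log x) ^ 2 = 5 / 972) ∧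
    Tendsto
      (fun θ : ℝ =>
        2 * sInf ((fun l : ℝ =>
            ∫ x in Ioo (0 : ℝ) 1,
              Real.log ((1 + θ * ψ x) / (l * x ^ (l - 1))) * (1 + θ * ψ x)) '' Ioi 0)
          / θ ^ 2)
      (𝓝[>] 0) (𝓝 (5 / 972)) := by
  intro ψ
  have hvariance : (∫ x in Ioo (0 : ℝ) 1, puriRubin x ^ 2)
      - (∫ x in Ioo (0 : ℝ) 1, puriRubin x * Real.log x) ^ 2 = 5 / 972 := by
    rw [integral_puriRubin_sq, integral_puriRubin_mul_log]
    norm_num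
  have hbelow : ∀ᵐ x ∂volume.restrict (Ioo 0 1), -1 / 2 ≤ puriRubin x :=
    ae_restrict_of_forall_mem measurableSet_Ioo fun x hx => neg_half_le_puriRubin hx.1.le
  refine ⟨integral_puriRubin, integral_puriRubin_mul_log, hvariance, ?_⟩
  exact hvariance ▸
    tendsto_two_mul_powerFamilyDist_div_sq memLp_puriRubin hbelow integral_puriRubin
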